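/- arXiv:2601.10864 — 2 statements merged into one kernel-verified Lean document; each statement's English description precedes it below -/
import Mathlib

section
/- Let x_1, …, x_d ∈ ℝ^n, let μ̂ = (1/d)∑_{i=1}^d x_i and Σ̂ = (1/d)∑_{i=1}^d (x_i − μ̂)(x_i − μ̂)ᵀ. Then the likelihood function (μ, Σ) ↦ ∏_{i=1}^d f_{μ,Σ}(x_i) attains a maximum over all μ ∈ ℝ^n and all real symmetric positive definite n×n matrices Σ if and only if Σ̂ is invertible. -/
open Matrix

noncomputable section

/-- The density of the `n`-variate Gaussian distribution with mean `μ` and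
covariance matrix `S`. -/
def gaussDensity {n : ℕ} (μ : Fin n → ℝ) (S : Matrix (Fin n) (Fin n) ℝ) (x : Fin n → ℝ) : ℝ :=
  Real.exp (-(1 / 2) * ((x - μ) ⬝ᵥ (S⁻¹).mulVec (x - μ))) /
    Real.sqrt ((2 * Real.pi) ^ n * S.det)

/-!
For fixed `S` the likelihood is largest at `μ = μ̂`, because the cross terms in
`∑ i, (x i - μ)ᵀ S⁻¹ (x i - μ)` cancel around the sample mean. In terms of the precision matrix
`K = S⁻¹`, what remains is a monotone function of `det K * exp (-tr (K Σ̂))`. If `Σ̂` is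
invertible, the inequality `∏ λ ≤ exp (∑ (λ - 1))` for the eigenvalues of `K Σ̂` shows that
`K = Σ̂⁻¹` is optimal. If `Σ̂ v = 0` with `v ≠ 0`, then passing from `K` to `K + v vᵀ` keeps the
trace and strictly increases the determinant, so there is no optimal `K`.
-/

section QuadraticForm

variable {ι m R : Type*} [Fintype m] [CommRing R]

lemma sum_dotProduct_mulVec_eq_trace_mul (s : Finset ι) (v : ι → m → R) (K : Matrix m m R) :
    ∑ i ∈ s, v i ⬝ᵥ K *ᵥ v i = (K * ∑ i ∈ s, vecMulVec (v i) (v i)).trace := by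
  rw [Matrix.mul_sum, trace_sum]
  refine Finset.sum_congr rfl fun i _ => ?_
  rw [mul_vecMulVec, trace_vecMulVec, dotProduct_comm]

lemma sum_sub_dotProduct_mulVec_sub_of_sum_sub_eq_zero (s : Finset ι) (x : ι → m → R)
    (K : Matrix m m R) {c : m → R} (hc : ∑ i ∈ s, (x i - c) = 0) (a : m → R) :
    ∑ i ∈ s, (x i - a) ⬝ᵥ K *ᵥ (x i - a) =
      ∑ i ∈ s, (x i - c) ⬝ᵥ K *ᵥ (x i - c) + s.card • ((c - a) ⬝ᵥ K *ᵥ (c - a)) := by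
  have expand (i : ι) : (x i - a) ⬝ᵥ K *ᵥ (x i - a) =
      (x i - c) ⬝ᵥ K *ᵥ (x i - c) + (x i - c) ⬝ᵥ K *ᵥ (c - a)
        + (c - a) ⬝ᵥ K *ᵥ (x i - c) + (c - a) ⬝ᵥ K *ᵥ (c - a) := by
    rw [← sub_add_sub_cancel (x i) c a, mulVec_add, add_dotProduct, dotProduct_add,
      dotProduct_add]
    ring
  have cross_left : ∑ i ∈ s, (x i - c) ⬝ᵥ K *ᵥ (c - a) = 0 := by
    rw [← sum_dotProduct, hc, zero_dotProduct]
  have cross_right : ∑ i ∈ s, (c - a) ⬝ᵥ K *ᵥ (x i - c) = 0 := by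
    rw [← dotProduct_sum, ← mulVec_sum, hc, mulVec_zero, dotProduct_zero]
  simp only [expand, Finset.sum_add_distrib, cross_left, cross_right, Finset.sum_const, add_zero]

variable [DecidableEq m]

lemma det_add_vecMulVec {A : Matrix m m R} (hA : IsUnit A.det) (u v : m → R) :
    (A + vecMulVec u v).det = A.det * (1 + v ⬝ᵥ A⁻¹ *ᵥ u) := by
  rw [vecMulVec_eq Unit, det_add_replicateCol_mul_replicateRow hA, Matrix.mul_assoc,
    ← replicateCol_mulVec, det_unique (n := Unit)]
  rfl

end QuadraticForm

section PosSemidef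

variable {m : Type*} [Fintype m] [DecidableEq m]

lemma det_le_exp_trace_sub_card {M : Matrix m m ℝ} (hM : M.PosSemidef) :
    M.det ≤ Real.exp (M.trace - Fintype.card m) := by
  have trace_sub_card : M.trace - Fintype.card m = ∑ i, (hM.1.eigenvalues i - 1) := by
    simp [hM.1.trace_eq_sum_eigenvalues]
  rw [trace_sub_card, Real.exp_sum, hM.1.det_eq_prod_eigenvalues]
  refine Finset.prod_le_prod (fun i _ => hM.eigenvalues_nonneg i) fun i _ => ?_
  simpa using Real.add_one_le_exp (hM.1.eigenvalues i - 1)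

open scoped MatrixOrder in
lemma det_mul_det_le_exp_trace_mul_sub_card {K T : Matrix m m ℝ} (hK : K.PosSemidef)
    (hT : T.PosSemidef) : K.det * T.det ≤ Real.exp ((K * T).trace - Fintype.card m) := by
  -- `K * T` need not be symmetric, but with `T = Bᴴ * B` it has the determinant and the trace of
  -- `B * K * Bᴴ`.
  obtain ⟨B, rfl⟩ := CStarAlgebra.nonneg_iff_eq_star_mul_self.mp hT.nonneg
  rw [star_eq_conjTranspose]
  have det_eq : K.det * (Bᴴ * B).det = (B * K * Bᴴ).det := by
    simp only [det_mul]
    ring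
  have trace_eq : (K * (Bᴴ * B)).trace = (B * K * Bᴴ).trace := by
    rw [← Matrix.mul_assoc, trace_mul_comm, Matrix.mul_assoc]
  rw [det_eq, trace_eq]
  exact det_le_exp_trace_sub_card (hK.mul_mul_conjTranspose_same B)

end PosSemidef

section ProfileLikelihood

variable {m : Type*} [Fintype m] [DecidableEq m]

/-- The Gaussian likelihood of a precision matrix `K` for a sample with covariance `T`, after
maximizing over the mean. For `d` sample points in dimension `n` it is normalized so that the
maximal likelihood is `√(profileLikelihood T K / (2π) ^ n) ^ d`. -/
def profileLikelihood (T K : Matrix m m ℝ) : ℝ :=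
  K.det * Real.exp (-(K * T).trace)

lemma profileLikelihood_le_profileLikelihood_inv {K T : Matrix m m ℝ} (hK : K.PosSemidef)
    (hT : T.PosDef) : profileLikelihood T K ≤ profileLikelihood T T⁻¹ := by
  have det_le := det_mul_det_le_exp_trace_mul_sub_card hK hT.posSemidef
  rw [← le_div_iff₀ hT.det_pos] at det_le
  calc K.det * Real.exp (-(K * T).trace)
      ≤ Real.exp ((K * T).trace - Fintype.card m) / T.det * Real.exp (-(K * T).trace) := by gcongr
    _ = T.det⁻¹ * Real.exp (-Fintype.card m) := by
      rw [div_mul_eq_mul_div, ← Real.exp_add, sub_add_eq_add_sub, add_neg_cancel, zero_sub,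
        div_eq_inv_mul]
    _ = profileLikelihood T T⁻¹ := by
      rw [profileLikelihood, nonsing_inv_mul _ hT.det_pos.ne'.isUnit, trace_one, det_nonsing_inv,
        Ring.inverse_eq_inv']

lemma exists_profileLikelihood_lt {K T : Matrix m m ℝ} (hK : K.PosDef) (hT : T.det = 0) :
    ∃ K' : Matrix m m ℝ, K'.PosDef ∧ profileLikelihood T K < profileLikelihood T K' := by
  obtain ⟨v, hv, hvT⟩ := exists_vecMul_eq_zero_iff.mpr hT
  refine ⟨K + vecMulVec v v, hK.add_posSemidef (posSemidef_vecMulVec_self_star v), ?_⟩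
  have trace_eq : ((K + vecMulVec v v) * T).trace = (K * T).trace := by
    rw [Matrix.add_mul, vecMulVec_mul, hvT, vecMulVec_zero, add_zero]
  have det_lt : K.det < (K + vecMulVec v v).det := by
    rw [det_add_vecMulVec hK.det_pos.ne'.isUnit]
    exact lt_mul_of_one_lt_right hK.det_pos
      (lt_add_of_pos_right 1 (hK.inv.dotProduct_mulVec_pos hv))
  unfold profileLikelihood
  rw [trace_eq]
  gcongr

end ProfileLikelihood

section Sample

lemma card_smul_inv_card_smul_sum {ι 𝕜 M : Type*} [Fintype ι] [DivisionRing 𝕜] [CharZero 𝕜]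
    [AddCommMonoid M] [Module 𝕜 M] (f : ι → M) :
    (Fintype.card ι : 𝕜) • (Fintype.card ι : 𝕜)⁻¹ • ∑ i, f i = ∑ i, f i := by
  cases isEmpty_or_nonempty ι
  · simp
  · exact smul_inv_smul₀ (Nat.cast_ne_zero.mpr Fintype.card_ne_zero) _

variable {ι m : Type*} [Fintype ι]

/-- The sample mean `μ̂` of a finite family of vectors. -/
def sampleMean (x : ι → m → ℝ) : m → ℝ :=
  (Fintype.card ι : ℝ)⁻¹ • ∑ i, x i

/-- The sample covariance matrix `Σ̂` of a finite family of vectors, normalized by the sample size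
(the maximum likelihood convention), not by the sample size minus one. -/
def sampleCov (x : ι → m → ℝ) : Matrix m m ℝ :=
  (Fintype.card ι : ℝ)⁻¹ • ∑ i, vecMulVec (x i - sampleMean x) (x i - sampleMean x)

lemma sum_sub_sampleMean (x : ι → m → ℝ) : ∑ i, (x i - sampleMean x) = 0 := by
  rw [Finset.sum_sub_distrib, Finset.sum_const, Finset.card_univ, ← Nat.cast_smul_eq_nsmul ℝ,
    sampleMean, card_smul_inv_card_smul_sum, sub_self]

lemma sampleCov_posSemidef [Finite m] (x : ι → m → ℝ) : (sampleCov x).PosSemidef :=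
  (posSemidef_sum _ fun i _ => posSemidef_vecMulVec_self_star (x i - sampleMean x)).smul
    (by positivity)

lemma sum_sub_dotProduct_mulVec_sub [Fintype m] (x : ι → m → ℝ) (K : Matrix m m ℝ) (a : m → ℝ) :
    ∑ i, (x i - a) ⬝ᵥ K *ᵥ (x i - a) =
      Fintype.card ι * ((K * sampleCov x).trace +
        (sampleMean x - a) ⬝ᵥ K *ᵥ (sampleMean x - a)) := by
  have mul_scatter : K * ∑ i, vecMulVec (x i - sampleMean x) (x i - sampleMean x) =
      (Fintype.card ι : ℝ) • (K * sampleCov x) := by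
    rw [sampleCov, ← Matrix.mul_smul, card_smul_inv_card_smul_sum]
  rw [sum_sub_dotProduct_mulVec_sub_of_sum_sub_eq_zero _ x K (sum_sub_sampleMean x),
    sum_dotProduct_mulVec_eq_trace_mul, mul_scatter, trace_smul, smul_eq_mul, nsmul_eq_mul,
    Finset.card_univ, mul_add]

end Sample

section Likelihood

variable {ι : Type*} [Fintype ι] {n : ℕ}

lemma gaussDensity_eq_exp_mul_sqrt (μ : Fin n → ℝ) (S : Matrix (Fin n) (Fin n) ℝ)
    (x : Fin n → ℝ) :
    gaussDensity μ S x =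
      Real.exp (-(1 / 2) * ((x - μ) ⬝ᵥ S⁻¹ *ᵥ (x - μ))) * √(S⁻¹.det / (2 * Real.pi) ^ n) := by
  rw [gaussDensity, div_eq_mul_inv, ← Real.sqrt_inv, _root_.mul_inv_rev, det_nonsing_inv,
    Ring.inverse_eq_inv', ← div_eq_mul_inv S.det⁻¹]

lemma prod_gaussDensity_eq (x : ι → Fin n → ℝ) (μ : Fin n → ℝ) (S : Matrix (Fin n) (Fin n) ℝ) :
    ∏ i, gaussDensity μ S (x i) =
      (Real.exp (-(1 / 2) * ((sampleMean x - μ) ⬝ᵥ S⁻¹ *ᵥ (sampleMean x - μ))) *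
        √(profileLikelihood (sampleCov x) S⁻¹ / (2 * Real.pi) ^ n)) ^ Fintype.card ι := by
  have sqrt_eq : √(profileLikelihood (sampleCov x) S⁻¹ / (2 * Real.pi) ^ n) =
      Real.exp (-(1 / 2) * (S⁻¹ * sampleCov x).trace) * √(S⁻¹.det / (2 * Real.pi) ^ n) := by
    rw [profileLikelihood, mul_comm, mul_div_assoc, Real.sqrt_mul (Real.exp_pos _).le,
      ← Real.exp_half]
    ring_nf
  simp only [gaussDensity_eq_exp_mul_sqrt, Finset.prod_mul_distrib, ← Real.exp_sum,
    ← Finset.mul_sum, sum_sub_dotProduct_mulVec_sub, Finset.prod_const, Finset.card_univ]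
  rw [sqrt_eq, ← mul_assoc (Real.exp _), ← Real.exp_add, mul_pow (Real.exp _), ← Real.exp_nat_mul]
  ring_nf

lemma prod_gaussDensity_sampleMean_eq (x : ι → Fin n → ℝ) (S : Matrix (Fin n) (Fin n) ℝ) :
    ∏ i, gaussDensity (sampleMean x) S (x i) =
      √(profileLikelihood (sampleCov x) S⁻¹ / (2 * Real.pi) ^ n) ^ Fintype.card ι := by
  rw [prod_gaussDensity_eq, sub_self, zero_dotProduct, mul_zero, Real.exp_zero, one_mul]

lemma prod_gaussDensity_le_prod_gaussDensity_sampleMean (x : ι → Fin n → ℝ) (μ : Fin n → ℝ)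
    {S : Matrix (Fin n) (Fin n) ℝ} (hS : S.PosSemidef) :
    ∏ i, gaussDensity μ S (x i) ≤ ∏ i, gaussDensity (sampleMean x) S (x i) := by
  have quad_nonneg : 0 ≤ (sampleMean x - μ) ⬝ᵥ S⁻¹ *ᵥ (sampleMean x - μ) :=
    hS.inv.dotProduct_mulVec_nonneg _
  rw [prod_gaussDensity_eq, prod_gaussDensity_sampleMean_eq]
  gcongr
  exact mul_le_of_le_one_left (Real.sqrt_nonneg _) (Real.exp_le_one_iff.mpr (by linarith))

lemma prod_gaussDensity_sampleMean_le_iff [Nonempty ι] (x : ι → Fin n → ℝ)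
    {S S' : Matrix (Fin n) (Fin n) ℝ} (hS : S.PosSemidef) :
    ∏ i, gaussDensity (sampleMean x) S' (x i) ≤ ∏ i, gaussDensity (sampleMean x) S (x i) ↔
      profileLikelihood (sampleCov x) S'⁻¹ ≤ profileLikelihood (sampleCov x) S⁻¹ := by
  have profile_nonneg : 0 ≤ profileLikelihood (sampleCov x) S⁻¹ :=
    mul_nonneg hS.inv.det_nonneg (Real.exp_pos _).le
  rw [prod_gaussDensity_sampleMean_eq, prod_gaussDensity_sampleMean_eq,
    pow_le_pow_iff_left₀ (Real.sqrt_nonneg _) (Real.sqrt_nonneg _) Fintype.card_ne_zero,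
    Real.sqrt_le_sqrt_iff (by positivity), div_le_div_iff_of_pos_right (by positivity)]

theorem likelihood_attains_max_iff_sample_cov_invertible_general [Nonempty ι]
    (x : ι → Fin n → ℝ) :
    (∃ (μ : Fin n → ℝ) (S : Matrix (Fin n) (Fin n) ℝ), S.PosDef ∧
        ∀ (μ' : Fin n → ℝ) (S' : Matrix (Fin n) (Fin n) ℝ), S'.PosDef →
          ∏ i, gaussDensity μ' S' (x i) ≤ ∏ i, gaussDensity μ S (x i)) ↔
      IsUnit (sampleCov x).det := by
  constructor
  · rintro ⟨μ, S, hS, hmax⟩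
    by_contra hdet
    rw [isUnit_iff_ne_zero, not_not] at hdet
    obtain ⟨K, hK, hlt⟩ := exists_profileLikelihood_lt hS.inv hdet
    have hle := (hmax (sampleMean x) K⁻¹ hK.inv).trans
      (prod_gaussDensity_le_prod_gaussDensity_sampleMean x μ hS.posSemidef)
    rw [prod_gaussDensity_sampleMean_le_iff x hS.posSemidef,
      nonsing_inv_nonsing_inv _ hK.det_pos.ne'.isUnit] at hle
    exact hlt.not_ge hle
  · intro hdet
    have hcov : (sampleCov x).PosDef :=
      (sampleCov_posSemidef x).posDef_iff_det_ne_zero.mpr hdet.ne_zero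
    refine ⟨sampleMean x, sampleCov x, hcov, fun μ' S' hS' => ?_⟩
    exact (prod_gaussDensity_le_prod_gaussDensity_sampleMean x μ' hS'.posSemidef).trans <|
      (prod_gaussDensity_sampleMean_le_iff x hcov.posSemidef).mpr <|
        profileLikelihood_le_profileLikelihood_inv hS'.inv.posSemidef hcov

end Likelihood

/-- The Gaussian likelihood function attains a maximum over all means `μ` and positive
definite covariance matrices `Σ` if and only if the sample covariance matrix `Σ̂`
is invertible. -/
theorem likelihood_attains_max_iff_sample_cov_invertible (n d : ℕ) (hd : 0 < d)
    (x : Fin d → Fin n → ℝ)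
    (muHat : Fin n → ℝ) (hmu : muHat = (d : ℝ)⁻¹ • ∑ i, x i)
    (SigHat : Matrix (Fin n) (Fin n) ℝ)
    (hSig : SigHat = (d : ℝ)⁻¹ • ∑ i, vecMulVec (x i - muHat) (x i - muHat)) :
    (∃ (μ : Fin n → ℝ) (S : Matrix (Fin n) (Fin n) ℝ), S.PosDef ∧
        ∀ (μ' : Fin n → ℝ) (S' : Matrix (Fin n) (Fin n) ℝ), S'.PosDef →
          ∏ i, gaussDensity μ' S' (x i) ≤ ∏ i, gaussDensity μ S (x i)) ↔
      IsUnit SigHat.det := by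
  obtain rfl : muHat = sampleMean x := by rw [hmu, sampleMean, Fintype.card_fin]
  obtain rfl : SigHat = sampleCov x := by rw [hSig, sampleCov, Fintype.card_fin]
  have : Nonempty (Fin d) := Fin.pos_iff_nonempty.mp hd
  exact likelihood_attains_max_iff_sample_cov_invertible_general x
end
end

section
/- (Buhl, lower bound) Let G be a simple graph on vertex set {1,…,n} with clique number ω (the largest size of a set of pairwise adjacent vertices). Then MLT(G) ≥ ω. -/
open MeasureTheory Matrix

noncomputable section

/-- The objective function `K ↦ tr(S K) − log det K` of Gaussian maximum likelihood,
where `S` is the sample covariance matrix. -/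
def mlObjective {n : ℕ} (S K : Matrix (Fin n) (Fin n) ℝ) : ℝ :=
  (S * K).trace - Real.log K.det

/-- The maximum likelihood threshold of a set `M` of positive definite matrices:
the smallest positive integer `d` such that for Lebesgue-almost every real `n × d`
matrix `X`, the function `K ↦ tr(X Xᵀ K) − log det K` attains a minimum on `M`. -/
def mlt (n : ℕ) (M : Set (Matrix (Fin n) (Fin n) ℝ)) : ℕ :=
  sInf {d : ℕ | 0 < d ∧
    ∀ᵐ X : Fin n → Fin d → ℝ ∂volume,
      ∃ K ∈ M, ∀ K' ∈ M,
        mlObjective (Matrix.of X * (Matrix.of X)ᵀ) K ≤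
          mlObjective (Matrix.of X * (Matrix.of X)ᵀ) K'}

/-- The Gaussian graphical model of a graph `G` on `{1,…,n}`: all symmetric positive
definite matrices whose off-diagonal entries vanish at non-edges of `G`. -/
def graphModel (n : ℕ) (G : SimpleGraph (Fin n)) : Set (Matrix (Fin n) (Fin n) ℝ) :=
  {K | K.PosDef ∧ ∀ i j, i ≠ j → ¬ G.Adj i j → K i j = 0}

/-!
If `S = X Xᵀ` is invertible, then `K ↦ tr(S K) − log det K` has compact sublevel sets in the cone of
positive definite matrices, because `log det K ≤ tr(S K) / 2 + const`; hence it attains its minimum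
on every closed model. As almost every square `X` is invertible, `d = n` is admissible, and the
infimum in `mlt` is not the junk value `sInf ∅ = 0`.

If `d` is smaller than the size of a clique `C`, then every `n × d` matrix `X` admits `v ≠ 0`
supported on `C` with `Xᵀ v = 0`. Adding `v vᵀ` to a member of the model stays in the model, keeps
`tr(X Xᵀ K)` and strictly increases `det K`, so the minimum is never attained.
-/

section LinearAlgebra

variable {m : Type*} [Fintype m]

theorem exists_ne_zero_mulVec_eq_zero_of_card_lt {R κ : Type*} [CommRing R] [Nontrivial R]
    [Fintype κ] (A : Matrix κ m R) {s : Finset m} (hs : Fintype.card κ < s.card) :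
    ∃ v : m → R, v ≠ 0 ∧ A *ᵥ v = 0 ∧ ∀ i ∉ s, v i = 0 := by
  have hdep : ¬ LinearIndepOn R A.col (s : Set m) := by
    intro hindep
    have hcard := hindep.encard_le_toENat_rank
    rw [Set.encard_coe_eq_coe_finsetCard, rank_fun', map_natCast, Nat.cast_le] at hcard
    exact hcard.not_gt hs
  obtain ⟨c, hsum, i, his, hci⟩ := not_linearIndepOn_finset_iff.mp hdep
  refine ⟨(s : Set m).indicator c, fun h => hci ?_, ?_, fun j hj => by simp [hj]⟩
  · simpa [his] using congrFun h i
  · rw [← hsum, mulVec_eq_sum]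
    refine (Finset.sum_subset (Finset.subset_univ s) fun j _ hj => ?_).symm.trans
      (Finset.sum_congr rfl fun j hj => ?_)
    · simp [hj]
    · simp [hj, col]

variable [DecidableEq m]

open scoped ComplexOrder in
theorem det_lt_det_add_vecMulVec_self_star {𝕜 : Type*} [RCLike 𝕜] {K : Matrix m m 𝕜}
    (hK : K.PosDef) {v : m → 𝕜} (hv : v ≠ 0) : K.det < (K + vecMulVec v (star v)).det := by
  have hinv : 0 < star v ⬝ᵥ K⁻¹ *ᵥ v := hK.inv.dotProduct_mulVec_pos hv
  have hrank_one : (1 + replicateRow Unit (star v) * K⁻¹ * replicateCol Unit v).det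
      = 1 + star v ⬝ᵥ K⁻¹ *ᵥ v := by
    rw [det_unique, Matrix.mul_assoc]
    simp [Matrix.mul_apply, dotProduct, mulVec]
  calc K.det < K.det * (1 + star v ⬝ᵥ K⁻¹ *ᵥ v) :=
        lt_mul_of_one_lt_right hK.det_pos (lt_add_of_pos_right 1 hinv)
    _ = (K + vecMulVec v (star v)).det := by
        rw [vecMulVec_eq Unit, det_add_replicateCol_mul_replicateRow hK.det_pos.ne'.isUnit,
          hrank_one]

theorem log_det_le_trace_sub_card {A : Matrix m m ℝ} (hA : A.PosDef) :
    Real.log A.det ≤ A.trace - Fintype.card m := by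
  have hdet : A.det = ∏ i, hA.1.eigenvalues i := by simpa using hA.1.det_eq_prod_eigenvalues
  have htrace : A.trace = ∑ i, hA.1.eigenvalues i := by simpa using hA.1.trace_eq_sum_eigenvalues
  calc Real.log A.det = ∑ i, Real.log (hA.1.eigenvalues i) := by
        rw [hdet, Real.log_prod fun i _ => (hA.eigenvalues_pos i).ne']
    _ ≤ ∑ i, (hA.1.eigenvalues i - 1) :=
        Finset.sum_le_sum fun i _ => Real.log_le_sub_one_of_pos (hA.eigenvalues_pos i)
    _ = A.trace - Fintype.card m := by simp [htrace]

open scoped ComplexOrder MatrixOrder in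
theorem exists_isUnit_eq_conjTranspose_mul_self {𝕜 : Type*} [RCLike 𝕜] {S : Matrix m m 𝕜}
    (hS : S.PosDef) : ∃ B : Matrix m m 𝕜, IsUnit B ∧ S = Bᴴ * B :=
  CStarAlgebra.isStrictlyPositive_iff_eq_star_mul_self.mp hS.isStrictlyPositive

theorem log_det_mul_le_trace_mul_sub_card {S K : Matrix m m ℝ} (hS : S.PosDef) (hK : K.PosDef) :
    Real.log (S * K).det ≤ (S * K).trace - Fintype.card m := by
  obtain ⟨B, hB, rfl⟩ := exists_isUnit_eq_conjTranspose_mul_self hS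
  have hdet : (Bᴴ * B * K).det = (B * K * Bᴴ).det := by simp only [det_mul]; ring
  have htrace : (Bᴴ * B * K).trace = (B * K * Bᴴ).trace := by
    rw [Matrix.mul_assoc, trace_mul_comm]
  rw [hdet, htrace]
  exact log_det_le_trace_sub_card (hB.posDef_star_right_conjugate_iff.mpr hK)

end LinearAlgebra

section Compactness

open scoped ComplexOrder in
theorem isClosed_setOfPred_posSemidef {m 𝕜 : Type*} [Finite m] [RCLike 𝕜] :
    IsClosed {K : Matrix m m 𝕜 | K.PosSemidef} := by
  cases nonempty_fintype m
  simp only [posSemidef_iff_dotProduct_mulVec, Set.ofPred_and, Set.ofPred_forall]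
  exact (isClosed_eq (by fun_prop) continuous_id).inter
    (isClosed_iInter fun x => isClosed_le continuous_const (by fun_prop))

variable {m : Type*} [Fintype m]

theorem abs_apply_le_trace {K : Matrix m m ℝ} (hK : K.PosSemidef) (i j : m) :
    |K i j| ≤ K.trace := by
  classical
  have hdiag (k : m) : K k k ≤ K.trace :=
    Finset.single_le_sum (f := fun k => K k k) (fun _ _ => hK.diag_nonneg) (Finset.mem_univ k)
  have hsymm : K j i = K i j := by simpa using hK.1.apply i j
  have hquad (s : ℝ) : 0 ≤ K i i + 2 * s * K i j + s ^ 2 * K j j := by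
    let x : m → ℝ := Pi.single i 1 + Pi.single j s
    calc 0 ≤ star x ⬝ᵥ K *ᵥ x := hK.dotProduct_mulVec_nonneg x
      _ = K i i + 2 * s * K i j + s ^ 2 * K j j := by
        simp only [x, star_trivial, mulVec_add, mulVec_single, MulOpposite.op_one, one_smul,
          op_smul_eq_smul, dotProduct_add, add_dotProduct, single_dotProduct, col_apply, one_mul,
          hsymm, dotProduct_smul, smul_eq_mul]
        ring
  have hadd := hquad 1
  have hsub := hquad (-1)
  have hi := hdiag i
  have hj := hdiag j
  rw [abs_le]
  constructor <;> linarith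

theorem isCompact_setOfPred_posSemidef_trace_le (R : ℝ) :
    IsCompact {K : Matrix m m ℝ | K.PosSemidef ∧ K.trace ≤ R} := by
  have hbox : IsCompact {K : Matrix m m ℝ | ∀ i j, K i j ∈ Set.Icc (-R) R} :=
    isCompact_pi_infinite fun _ => isCompact_pi_infinite fun _ => isCompact_Icc
  refine hbox.of_isClosed_subset (isClosed_setOfPred_posSemidef.and ?_)
    fun K hK i j => abs_le.mp ((abs_apply_le_trace hK.1 i j).trans hK.2)
  exact isClosed_le (by fun_prop) continuous_const

theorem isCompact_setOfPred_posSemidef_trace_mul_le {S : Matrix m m ℝ} (hS : S.PosDef) (R : ℝ) :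
    IsCompact {K : Matrix m m ℝ | K.PosSemidef ∧ (S * K).trace ≤ R} := by
  classical
  obtain ⟨B, hB, rfl⟩ := exists_isUnit_eq_conjTranspose_mul_self hS
  have hdet : IsUnit B.det := (isUnit_iff_isUnit_det B).mp hB
  have hcont : Continuous fun Q : Matrix m m ℝ => B⁻¹ * Q * B⁻¹ᴴ := by fun_prop
  refine ((isCompact_setOfPred_posSemidef_trace_le R).image hcont).of_isClosed_subset
    (isClosed_setOfPred_posSemidef.and ?_) ?_
  · exact isClosed_le (by fun_prop) continuous_const
  rintro K ⟨hK, htrace⟩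
  refine ⟨B * K * Bᴴ, ⟨hK.mul_mul_conjTranspose_same B, ?_⟩, ?_⟩
  · rwa [trace_mul_comm, ← Matrix.mul_assoc]
  · calc B⁻¹ * (B * K * Bᴴ) * B⁻¹ᴴ = B⁻¹ * B * K * (B⁻¹ * B)ᴴ := by
          simp only [conjTranspose_mul, Matrix.mul_assoc]
      _ = K := by simp only [nonsing_inv_mul B hdet, conjTranspose_one, one_mul, mul_one]

end Compactness

section MaximumLikelihood

variable {n : ℕ} {S : Matrix (Fin n) (Fin n) ℝ}

theorem add_log_det_le_mlObjective {K : Matrix (Fin n) (Fin n) ℝ} (hS : S.PosDef)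
    (hK : K.PosDef) : n + Real.log S.det ≤ mlObjective S K := by
  have hlog := log_det_mul_le_trace_mul_sub_card hS hK
  rw [det_mul, Real.log_mul hS.det_pos.ne' hK.det_pos.ne', Fintype.card_fin] at hlog
  unfold mlObjective
  linarith

theorem trace_mul_le_of_mlObjective_le {K : Matrix (Fin n) (Fin n) ℝ} {c : ℝ} (hS : S.PosDef)
    (hK : K.PosDef) (hc : mlObjective S K ≤ c) :
    (S * K).trace ≤ 2 * (c - n - Real.log ((1 / 2 : ℝ) • S).det) := by
  -- The minimum of the objective for `S / 2` bounds `tr(S K) / 2 - log det K` from below.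
  have hhalf := add_log_det_le_mlObjective (hS.smul (one_half_pos (α := ℝ))) hK
  rw [mlObjective, smul_mul, trace_smul, smul_eq_mul] at hhalf
  rw [mlObjective] at hc
  linarith

theorem posDef_and_mlObjective_le_iff {K : Matrix (Fin n) (Fin n) ℝ} {c : ℝ} :
    K.PosDef ∧ mlObjective S K ≤ c ↔
      K.PosSemidef ∧ Real.exp ((S * K).trace - c) ≤ K.det := by
  constructor
  · rintro ⟨hK, hc⟩
    rw [← Real.le_log_iff_exp_le hK.det_pos]
    exact ⟨hK.posSemidef, sub_le_comm.mp hc⟩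
  · rintro ⟨hK, hdet⟩
    have hpos : 0 < K.det := (Real.exp_pos _).trans_le hdet
    exact ⟨hK.posDef_iff_det_ne_zero.mpr hpos.ne',
      sub_le_comm.mp ((Real.le_log_iff_exp_le hpos).mpr hdet)⟩

theorem isCompact_setOfPred_posDef_mlObjective_le (hS : S.PosDef) (c : ℝ) :
    IsCompact {K : Matrix (Fin n) (Fin n) ℝ | K.PosDef ∧ mlObjective S K ≤ c} := by
  refine (isCompact_setOfPred_posSemidef_trace_mul_le hS _).of_isClosed_subset ?_
    fun K hK => ⟨hK.1.posSemidef, trace_mul_le_of_mlObjective_le hS hK.1 hK.2⟩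
  simp only [posDef_and_mlObjective_le_iff]
  refine isClosed_setOfPred_posSemidef.and ?_
  exact isClosed_le (by fun_prop) (by fun_prop)

theorem continuousOn_mlObjective (S : Matrix (Fin n) (Fin n) ℝ) :
    ContinuousOn (mlObjective S) {K | K.det ≠ 0} := by
  unfold mlObjective
  exact ContinuousOn.sub (by fun_prop) (ContinuousOn.log (by fun_prop) fun _ hK => hK)

/-- The maximum likelihood estimate for the sample covariance matrix `S` exists in the model `M`:
the objective attains its minimum on `M`. -/
def HasMLE (S : Matrix (Fin n) (Fin n) ℝ) (M : Set (Matrix (Fin n) (Fin n) ℝ)) : Prop :=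
  ∃ K ∈ M, ∀ K' ∈ M, mlObjective S K ≤ mlObjective S K'

theorem hasMLE_posDef_inter (hS : S.PosDef) {L : Set (Matrix (Fin n) (Fin n) ℝ)}
    (hL : IsClosed L) (hne : ({K | K.PosDef} ∩ L).Nonempty) :
    HasMLE S ({K | K.PosDef} ∩ L) := by
  obtain ⟨K₀, hK₀, hK₀L⟩ := hne
  have hcompact := (isCompact_setOfPred_posDef_mlObjective_le hS (mlObjective S K₀)).inter_right hL
  obtain ⟨K, ⟨⟨hK, hKK₀⟩, hKL⟩, hmin⟩ :=
    hcompact.exists_isMinOn ⟨K₀, ⟨hK₀, le_rfl⟩, hK₀L⟩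
      ((continuousOn_mlObjective S).mono fun _ hK => hK.1.1.det_pos.ne')
  refine ⟨K, ⟨hK, hKL⟩, fun K' hK' => ?_⟩
  rcases le_total (mlObjective S K') (mlObjective S K₀) with hle | hle
  · exact hmin ⟨⟨hK'.1, hle⟩, hK'.2⟩
  · exact hKK₀.trans hle

theorem mlObjective_add_vecMulVec_lt {K : Matrix (Fin n) (Fin n) ℝ} (hK : K.PosDef)
    {v : Fin n → ℝ} (hv : v ≠ 0) (hSv : S *ᵥ v = 0) :
    mlObjective S (K + vecMulVec v v) < mlObjective S K := by
  have htrace : (S * (K + vecMulVec v v)).trace = (S * K).trace := by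
    rw [Matrix.mul_add, mul_vecMulVec, hSv, zero_vecMulVec, add_zero]
  rw [mlObjective, mlObjective, htrace]
  have hdet : K.det < (K + vecMulVec v v).det := by
    simpa using det_lt_det_add_vecMulVec_self_star hK hv
  exact sub_lt_sub_left (Real.log_lt_log hK.det_pos hdet) _

end MaximumLikelihood

section GraphModel

variable {n : ℕ} {G : SimpleGraph (Fin n)} {S : Matrix (Fin n) (Fin n) ℝ}

theorem isClosed_setOfPred_apply_eq_zero_of_not_adj {V R : Type*} [Zero R] [TopologicalSpace R]
    [T2Space R] (G : SimpleGraph V) :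
    IsClosed {K : Matrix V V R | ∀ i j, i ≠ j → ¬ G.Adj i j → K i j = 0} := by
  simp only [Set.ofPred_forall]
  exact isClosed_iInter fun i => isClosed_iInter fun j => isClosed_iInter fun _ =>
    isClosed_iInter fun _ => isClosed_eq (by fun_prop) continuous_const

theorem hasMLE_graphModel (G : SimpleGraph (Fin n)) (hS : S.PosDef) :
    HasMLE S (graphModel n G) :=
  hasMLE_posDef_inter hS (isClosed_setOfPred_apply_eq_zero_of_not_adj G)
    ⟨1, PosDef.one, fun _ _ hij _ => one_apply_ne hij⟩

theorem add_vecMulVec_mem_graphModel {C : Set (Fin n)} (hC : G.IsClique C)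
    {K : Matrix (Fin n) (Fin n) ℝ} (hK : K ∈ graphModel n G) {v : Fin n → ℝ}
    (hv : ∀ i ∉ C, v i = 0) : K + vecMulVec v v ∈ graphModel n G := by
  refine ⟨hK.1.add_posSemidef (by simpa using posSemidef_vecMulVec_self_star v), ?_⟩
  intro i j hij hadj
  have hvv : v i * v j = 0 := by
    by_contra hne
    have hi : i ∈ C := not_imp_comm.mp (hv i) (left_ne_zero_of_mul hne)
    have hj : j ∈ C := not_imp_comm.mp (hv j) (right_ne_zero_of_mul hne)
    exact hadj (hC hi hj hij)
  rw [Matrix.add_apply, vecMulVec_apply, hK.2 i j hij hadj, hvv, add_zero]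

theorem not_hasMLE_graphModel_of_card_lt {κ : Type*} [Fintype κ] {C : Finset (Fin n)}
    (hC : G.IsClique C) (hcard : Fintype.card κ < C.card) (X : Matrix (Fin n) κ ℝ) :
    ¬ HasMLE (X * Xᵀ) (graphModel n G) := by
  rintro ⟨K, hK, hmin⟩
  obtain ⟨v, hv, hXv, hvC⟩ := exists_ne_zero_mulVec_eq_zero_of_card_lt Xᵀ hcard
  have hSv : (X * Xᵀ) *ᵥ v = 0 := by rw [← mulVec_mulVec, hXv, mulVec_zero]
  exact (mlObjective_add_vecMulVec_lt hK.1 hv hSv).not_ge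
    (hmin _ (add_vecMulVec_mem_graphModel hC hK hvC))

end GraphModel

theorem finite_setOfPred_det_add_smul_one_eq_zero {m R : Type*} [Fintype m] [DecidableEq m]
    [CommRing R] [IsDomain R] (A : Matrix m m R) : {t : R | (A + t • 1).det = 0}.Finite := by
  have hroots := Polynomial.finite_setOfPred_isRoot (charpoly_monic (-A)).ne_zero
  refine hroots.subset fun t ht => ?_
  have hchar : scalar m t - -A = A + t • 1 := by
    rw [sub_neg_eq_add, add_comm, scalar_apply, smul_one_eq_diagonal]
  rwa [Set.mem_ofPred_eq, Polynomial.IsRoot, eval_charpoly, hchar]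

theorem ae_det_ne_zero {m : Type*} [Fintype m] [DecidableEq m] :
    ∀ᵐ X : m → m → ℝ, (of X).det ≠ 0 := by
  have hmeas : MeasurableSet {X : m → m → ℝ | (of X).det ≠ 0} :=
    (isOpen_ne_fun (by fun_prop) continuous_const).measurableSet
  refine ae_mem_of_ae_add_linearMap_mem
    (LinearMap.toSpanSingleton ℝ (m → m → ℝ) (1 : Matrix m m ℝ)) volume volume hmeas fun X => ?_
  exact (finite_setOfPred_det_add_smul_one_eq_zero (of X)).countable.ae_notMem volume

/-- Buhl's lower bound: the clique number of `G` is at most `MLT(G)`. -/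
theorem cliqueNum_le_mlt (n : ℕ) (G : SimpleGraph (Fin n)) :
    G.cliqueNum ≤ mlt n (graphModel n G) := by
  obtain ⟨C, hC⟩ := G.exists_isNClique_cliqueNum
  rcases Nat.eq_zero_or_pos n with rfl | hn
  · rw [← hC.card_eq, Finset.eq_empty_of_isEmpty C]
    exact Nat.zero_le _
  refine le_csInf ⟨n, hn, ?_⟩ ?_
  · filter_upwards [ae_det_ne_zero] with X hX
    have hinj : Function.Injective (of X).vecMul :=
      vecMul_injective_of_isUnit ((isUnit_iff_isUnit_det _).mpr hX.isUnit)
    exact hasMLE_graphModel G (PosDef.mul_conjTranspose_self (of X) hinj)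
  · rintro d ⟨-, hae⟩
    by_contra! hlt
    obtain ⟨X, hX⟩ := hae.exists
    refine not_hasMLE_graphModel_of_card_lt hC.isClique ?_ (of X) hX
    rwa [Fintype.card_fin, hC.card_eq]
end
end
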